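/- arXiv:math/0007181 — 2 statements merged into one kernel-verified Lean document; each statement's English description precedes it below -/
import Mathlib

section
/- Let r ≥ 1 and let n₁, …, n_r be natural numbers with each nᵢ ≠ 1, nᵢ dividing nᵢ₊₁ for i = 1, …, r−1, and n₁ = 0 or n₁ = 2. Let A = ℤ/n₁ℤ × ⋯ × ℤ/n_rℤ. Then for any two r-tuples a = (a₁, …, a_r) and b = (b₁, …, b_r) of elements of A, each of which generates A, there exists a k-algebra isomorphism Φ of K_r = Frac(k[X₁, …, X_r]) satisfying Φ(g ·_a x) = g ·_b Φ(x) for all g ∈ Hom(A, kˣ) and x ∈ K_r. (If n₁ = 0 or 2, any two faithful r-dimensional representations of the rank-r diagonalizable group with character lattice A are birationally equivalent.) -/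
/-!
The tuple `a` amounts to a surjection `α : ℤ^r → A` (`tupleHom`), giving the weight of every Laurent
monomial, and `b` to a surjection `β`. If `β ∘ e = α` for some automorphism `e` of `ℤ^r`, then the
monomial automorphism `X^m ↦ X^(e m)` intertwines the two actions (`exists_intertwining`).

Such an `e` exists because both surjections can be brought to the standard form
`m ↦ (mᵢ mod nᵢ)ᵢ` by automorphisms of `ℤ^r` (`exists_equiv_standard`). The proof is by induction on
`r`. For `r ≥ 2`, the last component of the surjection lifts to a surjective integral functional, so
in a suitable basis it is the last coordinate (`exists_equiv_zmod`). Since every `nᵢ` divides `n_r`,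
the first `r - 1` basis vectors then map onto the product of the first `r - 1` factors, so the last
basis vector can be corrected by a combination of them and the induction hypothesis applies. For
`r = 1` one needs units of `ℤ/n₁ℤ` to be `±1`, which holds for `n₁ = 0` and `n₁ = 2`.
-/

/-! ### Surjections from a lattice -/

/-- A surjective functional on `ℤ^(r+1)` becomes the last coordinate after an automorphism: its kernel
is free of rank `r` and is complemented by a vector on which the functional is `1`. -/
theorem exists_equiv_of_surjective_functional {r : ℕ} (ψ : (Fin (r + 1) → ℤ) →ₗ[ℤ] ℤ)
    (hψ : Function.Surjective ψ) :
    ∃ e : (Fin (r + 1) → ℤ) ≃ₗ[ℤ] (Fin (r + 1) → ℤ), ∀ m, ψ (e m) = m (Fin.last r) := by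
  obtain ⟨v, hv⟩ := hψ 1
  let s : (LinearMap.ker ψ × ℤ) ≃ₗ[ℤ] (Fin (r + 1) → ℤ) :=
    { toFun := fun p => p.1 + p.2 • v
      map_add' := fun p q => by simp only [Prod.fst_add, Prod.snd_add, Submodule.coe_add]; module
      map_smul' := fun c p => by
        simp only [Prod.smul_fst, Prod.smul_snd, Submodule.coe_smul, RingHom.id_apply]; module
      invFun := fun m => (⟨m - ψ m • v, by simp [hv, -zsmul_eq_mul]⟩, ψ m)
      left_inv := fun p => by
        have h1 : ψ p.1 = 0 := p.1.2
        ext1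
        · apply Subtype.ext
          simp [h1, hv, -zsmul_eq_mul]
        · simp [h1, hv, -zsmul_eq_mul]
      right_inv := fun m => by simp }
  have hs : ∀ p, ψ (s p) = p.2 := fun p => by
    have h1 : ψ p.1 = 0 := p.1.2
    change ψ (p.1 + p.2 • v) = p.2
    simp [h1, hv, -zsmul_eq_mul]
  have hrank : Module.finrank ℤ (LinearMap.ker ψ) = r := by
    have h := s.finrank_eq
    rw [Module.finrank_prod] at h
    simpa using h
  let b := (Module.finBasisOfFinrankEq ℤ (LinearMap.ker ψ) hrank).equivFun
  let c : (Fin (r + 1) → ℤ) ≃ₗ[ℤ] ((Fin r → ℤ) × ℤ) :=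
    { toFun := fun m => (fun i => m i.castSucc, m (Fin.last r))
      map_add' := fun _ _ => rfl
      map_smul' := fun _ _ => rfl
      invFun := fun p => Fin.snoc (α := fun _ => ℤ) p.1 p.2
      left_inv := fun m => Fin.snoc_init_self m
      right_inv := fun p => by ext <;> simp }
  exact ⟨c ≪≫ₗ (b.symm.prodCongr (LinearEquiv.refl ℤ ℤ)) ≪≫ₗ s, fun m => hs _⟩

/-- After an automorphism, any functional on `ℤ^(r+1)` is a multiple `d` of the last coordinate, where
`d` generates its image. -/
theorem exists_equiv_functional {r : ℕ} (c : (Fin (r + 1) → ℤ) →ₗ[ℤ] ℤ) :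
    ∃ (d : ℤ) (e : (Fin (r + 1) → ℤ) ≃ₗ[ℤ] (Fin (r + 1) → ℤ)),
      ∀ m, c (e m) = d * m (Fin.last r) := by
  obtain ⟨d, hd⟩ := (IsPrincipalIdealRing.principal (LinearMap.range c)).principal
  rcases eq_or_ne d 0 with rfl | hd0
  · refine ⟨0, LinearEquiv.refl ℤ _, fun m => ?_⟩
    have : c m ∈ LinearMap.range c := ⟨m, rfl⟩
    rw [hd] at this
    simpa using this
  · have hdvd : ∀ m, d ∣ c m := fun m => by
      have : c m ∈ LinearMap.range c := ⟨m, rfl⟩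
      rw [hd] at this
      exact Ideal.mem_span_singleton.1 this
    let ψ : (Fin (r + 1) → ℤ) →ₗ[ℤ] ℤ :=
      { toFun := fun m => c m / d
        map_add' := fun x y => by rw [map_add, Int.add_ediv_of_dvd_left (hdvd x)]
        map_smul' := fun t x => by simp [Int.mul_ediv_assoc _ (hdvd x), -zsmul_eq_mul] }
    have hψ : ∀ m, c m = d * ψ m := fun m => (Int.mul_ediv_cancel' (hdvd m)).symm
    have hsurj : Function.Surjective ψ := fun t => by
      have : d * t ∈ LinearMap.range c := by
        rw [hd]; exact Ideal.mem_span_singleton.2 (dvd_mul_right d t)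
      obtain ⟨m, hm⟩ := this
      exact ⟨m, mul_left_cancel₀ hd0 (by rw [← hψ, hm])⟩
    obtain ⟨e, he⟩ := exists_equiv_of_surjective_functional ψ hsurj
    exact ⟨d, e, fun m => by rw [hψ, he]⟩

/-- A surjection from a lattice of rank at least two to `ℤ/nℤ` becomes reduction of the last
coordinate. In a suitable basis it is `d * (last coordinate)` with `d` prime to `n`; thanks to the
first coordinate, it lifts to the surjective integral functional `d * (last) + n * (first)`. In rank one
no such lift need exist, which is where the invariant in `(ℤ/n₁ℤ)ˣ / {±1}` comes from. -/
theorem exists_equiv_zmod {r n : ℕ} (φ : (Fin (r + 2) → ℤ) →+ ZMod n)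
    (hφ : Function.Surjective φ) :
    ∃ e : (Fin (r + 2) → ℤ) ≃+ (Fin (r + 2) → ℤ), ∀ m, φ (e m) = (m (Fin.last _) : ZMod n) := by
  have hlift : ∃ c : (Fin (r + 2) → ℤ) →ₗ[ℤ] ℤ, ∀ m, φ m = (c m : ZMod n) := by
    choose t ht using fun i : Fin (r + 2) => ZMod.intCast_surjective (φ (Pi.single i 1))
    refine ⟨Fintype.linearCombination ℤ t, fun m => ?_⟩
    conv_lhs => rw [pi_eq_sum_univ' m]
    rw [map_sum]
    simp [Fintype.linearCombination_apply, ht, map_zsmul, -zsmul_eq_mul]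
    simp
  obtain ⟨c, hc⟩ := hlift
  obtain ⟨d, e, he⟩ := exists_equiv_functional c
  have hcop : IsCoprime d (n : ℤ) := by
    obtain ⟨m, hm⟩ := hφ 1
    obtain ⟨m, rfl⟩ := e.surjective m
    rw [hc, he] at hm
    have : ((d * m (Fin.last _) : ℤ) : ZMod n) = (1 : ℤ) := by rw [hm]; simp
    obtain ⟨q, hq⟩ := (ZMod.intCast_eq_intCast_iff_dvd_sub _ _ _).1 this
    exact ⟨m (Fin.last _), q, by linear_combination -hq⟩
  obtain ⟨u, w, huw⟩ := hcop
  let ψ : (Fin (r + 2) → ℤ) →ₗ[ℤ] ℤ :=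
    d • LinearMap.proj (Fin.last _) + (n : ℤ) • LinearMap.proj 0
  have hψ : ∀ m, ψ m = d * m (Fin.last _) + n * m 0 := fun m => by simp [ψ]
  have hsurj : Function.Surjective ψ := fun t => by
    refine ⟨Pi.single (Fin.last _) (t * u) + Pi.single 0 (t * w), ?_⟩
    rw [hψ]
    simp [Fin.ext_iff]
    linear_combination t * huw
  obtain ⟨e', he'⟩ := exists_equiv_of_surjective_functional ψ hsurj
  refine ⟨(e' ≪≫ₗ e).toAddEquiv, fun m => ?_⟩
  change φ (e (e' m)) = _
  rw [hc, he, ← he' m, hψ]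
  simp

/-- The rank-one case: every unit of `ℤ/0ℤ = ℤ` or `ℤ/2ℤ` is `±1`, hence lifts to an automorphism
of `ℤ`. -/
theorem exists_equiv_fin_one {n : ℕ → ℕ} (h0 : n 0 = 0 ∨ n 0 = 2)
    (f : (Fin 1 → ℤ) →+ (∀ i : Fin 1, ZMod (n i.val))) (hf : Function.Surjective f) :
    ∃ e : (Fin 1 → ℤ) ≃+ (Fin 1 → ℤ), ∀ m i, f (e m) i = (m i : ZMod (n i.val)) := by
  obtain ⟨u, key⟩ : ∃ u : ZMod (n 0), ∀ m, f m 0 = ((m 0 : ZMod (n 0)) * u : ZMod (n 0)) := by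
    refine ⟨f 1 0, fun m => ?_⟩
    have h : m = m 0 • (1 : Fin 1 → ℤ) := by
      ext i
      rw [Subsingleton.elim i 0]
      simp
    have h1 : f m 0 = (m 0 • f 1) 0 := by rw [← map_zsmul, ← h]
    exact h1.trans (zsmul_eq_mul _ _)
  have hunit : ∃ t : ZMod (n 0), t * u = 1 := by
    obtain ⟨m, hm⟩ := hf 1
    exact ⟨(m 0 : ZMod (n 0)), by rw [← key, hm]; rfl⟩
  have hpm : u = 1 ∨ u = -1 := by
    clear key
    revert u
    generalize n 0 = N at *
    rintro u ⟨t, ht⟩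
    rcases h0 with rfl | rfl
    · exact Int.isUnit_iff.1 (IsUnit.of_mul_eq_one_right t ht)
    · revert t u; decide
  rcases hpm with rfl | rfl
  · refine ⟨AddEquiv.refl _, fun m i => ?_⟩
    obtain rfl := Subsingleton.elim 0 i
    exact (key m).trans (mul_one _)
  · refine ⟨AddEquiv.neg _, fun m i => ?_⟩
    obtain rfl := Subsingleton.elim 0 i
    refine (key (-m)).trans ?_
    simp

/-- Every surjection `ℤ^(r+1) → ℤ/n₁ × ⋯ × ℤ/n_(r+1)` becomes the standard one after precomposition
with an automorphism of `ℤ^(r+1)`. -/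
theorem exists_equiv_standard {n : ℕ → ℕ} (h0 : n 0 = 0 ∨ n 0 = 2) (r : ℕ)
    (hdvd : ∀ i, i + 1 < r + 1 → n i ∣ n (i + 1))
    (f : (Fin (r + 1) → ℤ) →+ (∀ i : Fin (r + 1), ZMod (n i.val))) (hf : Function.Surjective f) :
    ∃ e : (Fin (r + 1) → ℤ) ≃+ (Fin (r + 1) → ℤ),
      ∀ m i, f (e m) i = (m i : ZMod (n i.val)) := by
  induction r with
  | zero => exact exists_equiv_fin_one h0 f hf
  | succ r ih =>
    obtain ⟨e₁, he₁⟩ := exists_equiv_zmod (n := n (r + 1))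
      ((Pi.evalAddMonoidHom (fun i : Fin (r + 2) => ZMod (n i.val)) (Fin.last _)).comp f)
      (fun y => by
        obtain ⟨m, hm⟩ := hf (Pi.single (Fin.last _) y)
        exact ⟨m, by simp [hm]⟩)
    -- `f'` is `f` in a basis in which its last coordinate is standard.
    let f' := f.comp e₁.toAddMonoidHom
    have hf' : Function.Surjective f' := hf.comp e₁.surjective
    have hlast : ∀ m, f' m (Fin.last _) = (m (Fin.last _) : ZMod (n (r + 1))) := he₁
    -- `j` is the inclusion of `ℤ^(r+1)` as the vectors with vanishing last coordinate.
    let j : (Fin (r + 1) → ℤ) →+ (Fin (r + 2) → ℤ) :=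
      { toFun := fun m => Fin.snoc (α := fun _ => ℤ) m 0
        map_zero' := by ext i; refine Fin.lastCases ?_ (fun i => ?_) i <;> simp
        map_add' := fun x y => by ext i; refine Fin.lastCases ?_ (fun i => ?_) i <;> simp }
    let v : Fin (r + 2) → ℤ := Pi.single (Fin.last _) 1
    have hj : ∀ m i, j m (Fin.castSucc i) = m i := fun m i => by simp [j]
    have hjl : ∀ m, j m (Fin.last _) = 0 := fun m => by simp [j]
    have hsplit : ∀ m : Fin (r + 2) → ℤ, m = j (Fin.init m) + m (Fin.last _) • v := fun m => by
      ext i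
      refine Fin.lastCases ?_ (fun i => ?_) i
      · simp [hjl, v]
      · simp [hj, v, Fin.init]
    have hI : ∀ (y : Fin (r + 1) → ℤ) (t : ℤ), Fin.init (j y + t • v) = y := fun y t => by
      ext i
      simp [Fin.init, hj, v]
    have hL : ∀ (y : Fin (r + 1) → ℤ) (t : ℤ), (j y + t • v) (Fin.last _) = t := fun y t => by
      simp [hjl, v]
    let g : (Fin (r + 1) → ℤ) →+ (∀ i : Fin (r + 1), ZMod (n i.val)) :=
      { toFun := fun m i => f' (j m) i.castSucc
        map_zero' := by ext i; rw [map_zero, map_zero]; rfl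
        map_add' := fun x y => by ext i; rw [map_add, map_add]; rfl }
    have hdvd' : ∀ i : Fin (r + 1), n i.val ∣ n (r + 1) := fun i => by
      have : ∀ d, i.val + d ≤ r + 1 → n i.val ∣ n (i.val + d) := fun d => by
        induction d with
        | zero => intro; rfl
        | succ d ihd => intro h; exact (ihd (by omega)).trans (hdvd _ (by omega))
      have h := this (r + 1 - i.val) (by omega)
      rwa [show i.val + (r + 1 - i.val) = r + 1 by omega] at h
    have hg : Function.Surjective g := fun y => by
      obtain ⟨m, hm⟩ := hf' (Fin.snoc (α := fun i : Fin (r + 2) => ZMod (n i.val)) y 0)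
      refine ⟨Fin.init m, ?_⟩
      have hml : (m (Fin.last _) : ZMod (n (r + 1))) = 0 := by
        rw [← hlast, hm]; exact Fin.snoc_last _ _
      ext i
      have h1 : f' m i.castSucc = y i := by rw [hm]; exact Fin.snoc_castSucc _ _ i
      -- The last coordinate of `m` is divisible by `n (r + 1)`, which kills the other factors.
      have h2 : ((m (Fin.last _) : ℤ) : ZMod (n i.val)) = 0 := by
        rw [ZMod.intCast_zmod_eq_zero_iff_dvd] at hml ⊢
        exact (Int.natCast_dvd_natCast.2 (hdvd' i)).trans hml
      have h3 : f' m i.castSucc = f' (j (Fin.init m)) i.castSucc +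
          m (Fin.last _) • f' v i.castSucc := by
        conv_lhs => rw [hsplit m]
        rw [map_add, map_zsmul]; rfl
      have h4 : m (Fin.last _) • f' v i.castSucc = 0 := by
        rw [zsmul_eq_mul]
        exact (congrArg (· * (f' v i.castSucc : ZMod (n i.val))) h2).trans (zero_mul _)
      rw [h4, add_zero] at h3
      exact h3.symm.trans h1
    obtain ⟨e₂, he₂⟩ := ih (fun i hi => hdvd i (by omega)) g hg
    obtain ⟨x, hx⟩ := hg (fun i => f' v i.castSucc)
    -- `e₃` applies `e₂` to the first coordinates and replaces `v` by `v - j x`, so that its image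
    -- under `f'` has trivial first coordinates.
    let e₃ : (Fin (r + 2) → ℤ) ≃+ (Fin (r + 2) → ℤ) :=
      { toFun := fun m => j (e₂ (Fin.init m) - m (Fin.last _) • x) + m (Fin.last _) • v
        invFun := fun m => j (e₂.symm (Fin.init m + m (Fin.last _) • x)) + m (Fin.last _) • v
        left_inv := fun m => by
          dsimp only
          rw [hI, hL, sub_add_cancel, e₂.symm_apply_apply, ← hsplit]
        right_inv := fun m => by
          dsimp only
          rw [hI, hL, e₂.apply_symm_apply, add_sub_cancel_right, ← hsplit]
        map_add' := fun a b => by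
          have : Fin.init (a + b) = Fin.init a + Fin.init b := rfl
          simp only [this, map_add, map_sub, Pi.add_apply, map_zsmul, add_smul]
          abel }
    refine ⟨e₃.trans e₁, fun m i => ?_⟩
    change f' (j (e₂ (Fin.init m) - m (Fin.last _) • x) + m (Fin.last _) • v) i = _
    refine Fin.lastCases ?_ (fun i => ?_) i
    · rw [hlast]; simp [hjl, v]
    · have h1 : f' (j (e₂ (Fin.init m))) i.castSucc = (m i.castSucc : ZMod (n i.val)) := he₂ _ i
      have h2 : f' (j x) i.castSucc = f' v i.castSucc := congrFun hx i
      rw [map_sub, map_zsmul, map_add, map_sub, map_zsmul, map_zsmul]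
      simp only [Pi.add_apply, Pi.sub_apply, Pi.smul_apply]
      rw [h2, sub_add_cancel]
      exact h1

/-! ### Monomial automorphisms of the rational function field -/

/-- The rational function field `k(X₁, …, X_r)`. -/
abbrev RatFunField (k : Type) [Field k] (r : ℕ) : Type := FractionRing (MvPolynomial (Fin r) k)

noncomputable section
namespace RatFunField
variable {k : Type} [Field k] {r : ℕ}

/-- The coordinate function `Xᵢ` in the rational function field. -/
def coord (k : Type) [Field k] {r : ℕ} (i : Fin r) : RatFunField k r :=
  algebraMap (MvPolynomial (Fin r) k) _ (MvPolynomial.X i)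

theorem coord_ne_zero (i : Fin r) : coord k i ≠ 0 :=
  (map_ne_zero_iff _ (IsFractionRing.injective _ _)).2 (MvPolynomial.X_ne_zero i)

/-- The Laurent monomial `X^m` with exponent vector `m ∈ ℤ^r`. -/
def mon (k : Type) [Field k] {r : ℕ} (m : Fin r → ℤ) : RatFunField k r := ∏ i, coord k i ^ m i

theorem mon_add (m m' : Fin r → ℤ) : mon k (m + m') = mon k m * mon k m' := by
  simp only [mon]
  rw [← Finset.prod_mul_distrib]
  exact Finset.prod_congr rfl fun i _ => zpow_add₀ (coord_ne_zero i) (m i) (m' i)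

theorem mon_zero : mon k (0 : Fin r → ℤ) = 1 := by simp [mon]

theorem mon_single (i : Fin r) : mon k (Pi.single i 1) = coord k i := by
  rw [mon, Finset.prod_eq_single i] <;> simp +contextual

/-- Laurent monomials as a homomorphism from the exponent lattice, written multiplicatively. -/
def monHom (k : Type) [Field k] {r : ℕ} : Multiplicative (Fin r → ℤ) →* (RatFunField k r) where
  toFun m := mon k m.toAdd
  map_one' := mon_zero
  map_mul' := fun m m' => mon_add m.toAdd m'.toAdd

theorem mon_map (e : (Fin r → ℤ) →+ (Fin r → ℤ)) (m : Fin r → ℤ) :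
    mon k (e m) = ∏ i, mon k (e (Pi.single i 1)) ^ m i := by
  have hz : ∀ (t : ℤ) (m : Fin r → ℤ), mon k (t • m) = mon k m ^ t := fun t m => by
    simp only [mon, Pi.smul_apply, smul_eq_mul, mul_comm t, zpow_mul, Finset.prod_zpow]
  have hs : ∀ (s : Finset (Fin r)) (w : Fin r → (Fin r → ℤ)),
      mon k (∑ i ∈ s, w i) = ∏ i ∈ s, mon k (w i) := fun s w =>
    map_prod (monHom k) (fun i => Multiplicative.ofAdd (w i)) s
  conv_lhs => rw [pi_eq_sum_univ' m]
  rw [map_sum, hs]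
  exact Finset.prod_congr rfl fun i _ => by rw [map_zsmul, hz]

theorem hom_ext {φ ψ : RatFunField k r →ₐ[k] RatFunField k r}
    (h : ∀ i, φ (coord k i) = ψ (coord k i)) : φ = ψ :=
  IsLocalization.algHom_ext (nonZeroDivisors (MvPolynomial (Fin r) k))
    (MvPolynomial.algHom_ext h)

theorem map_mon (φ : RatFunField k r →ₐ[k] RatFunField k r) (m : Fin r → ℤ) :
    φ (mon k m) = ∏ i, φ (coord k i) ^ m i := by
  simp [mon]

/-- The monomials attached to a basis of `ℤ^r` are algebraically independent: each `Xᵢ` is a Laurent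
monomial in them, so `k(X₁, …, X_r)` is algebraic over the algebra they generate, and there are only
as many of them as the transcendence degree. -/
theorem algebraicIndependent_mon (e : (Fin r → ℤ) ≃+ (Fin r → ℤ)) :
    AlgebraicIndependent k fun i => mon k (e (Pi.single i 1)) := by
  let y : Fin r → RatFunField k r := fun i => mon k (e (Pi.single i 1))
  let S := Algebra.adjoin k (Set.range y)
  have hy : ∀ i, IsAlgebraic S (y i) := fun i =>
    isAlgebraic_algebraMap (⟨y i, Algebra.subset_adjoin ⟨i, rfl⟩⟩ : S)
  have hzpow : ∀ i (t : ℤ), IsAlgebraic S (y i ^ t) := fun i t => by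
    cases t with
    | ofNat t => simpa using (hy i).pow t
    | negSucc t => simpa using ((hy i).pow (t + 1)).inv
  have hcoord : ∀ i, IsAlgebraic S (coord k i) := fun i => by
    rw [← mon_single, ← e.apply_symm_apply (Pi.single i 1)]
    have := mon_map (k := k) e.toAddMonoidHom (e.symm (Pi.single i 1))
    change mon k (e _) = _ at this
    rw [this]
    exact (Subalgebra.algebraicClosure S (RatFunField k r)).prod_mem fun j _ => hzpow j _
  have hpoly : ∀ p : MvPolynomial (Fin r) k,
      IsAlgebraic S (algebraMap _ (RatFunField k r) p) := fun p => by
    induction p using MvPolynomial.induction_on with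
    | C c => exact isAlgebraic_algebraMap (algebraMap k S c)
    | add p q hp hq => rw [map_add]; exact hp.add hq
    | mul_X p i hp => rw [map_mul]; exact hp.mul (hcoord i)
  have : Algebra.IsAlgebraic S (RatFunField k r) := ⟨fun z => by
    obtain ⟨p, q, -, rfl⟩ := IsFractionRing.div_surjective (A := MvPolynomial (Fin r) k) z
    rw [div_eq_mul_inv]
    exact (hpoly p).mul (hpoly q).inv⟩
  have hX : AlgebraicIndependent k (coord k (r := r)) :=
    (MvPolynomial.algebraicIndependent_X (Fin r) k).map' (f := IsScalarTower.toAlgHom k _ _)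
      (IsFractionRing.injective (MvPolynomial (Fin r) k) (RatFunField k r))
  exact (Algebra.IsAlgebraic.isTranscendenceBasis_of_le_trdeg_of_finite k y
    hX.cardinalMk_le_trdeg).1

/-- The endomorphism `X^m ↦ X^(e m)` of the rational function field attached to `e ∈ GL_r(ℤ)`. -/
def monomialHom (e : (Fin r → ℤ) ≃+ (Fin r → ℤ)) : RatFunField k r →ₐ[k] RatFunField k r :=
  IsFractionRing.liftAlgHom (g := MvPolynomial.aeval fun i => mon k (e (Pi.single i 1)))
    (algebraicIndependent_mon e : Function.Injective _)

theorem monomialHom_mon (e : (Fin r → ℤ) ≃+ (Fin r → ℤ)) (m : Fin r → ℤ) :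
    monomialHom e (mon k m) = mon k (e m) := by
  have h : ∀ i, monomialHom e (coord k i) = mon k (e (Pi.single i 1)) := fun i => by
    have hinj : Function.Injective
        (MvPolynomial.aeval fun i => mon k (e (Pi.single i 1)) :
          MvPolynomial (Fin r) k →ₐ[k] RatFunField k r).toRingHom := algebraicIndependent_mon e
    refine (IsFractionRing.lift_algebraMap (K := RatFunField k r) hinj _).trans ?_
    exact MvPolynomial.aeval_X _ i
  rw [map_mon]
  simp only [h]
  exact (mon_map e.toAddMonoidHom m).symm

theorem monomialHom_comp_symm (e : (Fin r → ℤ) ≃+ (Fin r → ℤ)) :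
    (monomialHom e).comp (monomialHom e.symm) = AlgHom.id k (RatFunField k r) :=
  hom_ext fun i => by simp [← mon_single, monomialHom_mon]

/-- The automorphism `X^m ↦ X^(e m)` of the rational function field attached to `e ∈ GL_r(ℤ)`. -/
def monomialEquiv (e : (Fin r → ℤ) ≃+ (Fin r → ℤ)) : RatFunField k r ≃ₐ[k] RatFunField k r :=
  AlgEquiv.ofAlgHom (monomialHom e) (monomialHom e.symm) (monomialHom_comp_symm e)
    (monomialHom_comp_symm e.symm)

theorem monomialEquiv_mon (e : (Fin r → ℤ) ≃+ (Fin r → ℤ)) (m : Fin r → ℤ) :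
    monomialEquiv e (mon k m) = mon k (e m) := monomialHom_mon e m

end RatFunField
end

/-! ### Weights and equivariance -/

/-- The homomorphism `ℤ^r → A` sending the standard basis to the tuple `a`; it gives the weight of
each Laurent monomial. -/
def tupleHom {A : Type} [AddCommGroup A] {r : ℕ} (a : Fin r → A) : (Fin r → ℤ) →+ A :=
  (Fintype.linearCombination ℤ a).toAddMonoidHom

theorem tupleHom_apply {A : Type} [AddCommGroup A] {r : ℕ} (a : Fin r → A) (m : Fin r → ℤ) :
    tupleHom a m = ∑ i, m i • a i := rfl

theorem tupleHom_single {A : Type} [AddCommGroup A] {r : ℕ} (a : Fin r → A) (i : Fin r) :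
    tupleHom a (Pi.single i 1) = a i := by
  rw [tupleHom_apply, Finset.sum_eq_single i] <;> simp +contextual

theorem tupleHom_surjective {A : Type} [AddCommGroup A] {r : ℕ} {a : Fin r → A}
    (ha : AddSubgroup.closure (Set.range a) = ⊤) : Function.Surjective (tupleHom a) := by
  rw [← AddMonoidHom.range_eq_top, eq_top_iff, ← ha, AddSubgroup.closure_le]
  rintro _ ⟨i, rfl⟩
  exact ⟨Pi.single i 1, tupleHom_single a i⟩

open RatFunField in
/-- In the representation with characters `b`, the monomial `X^m` has weight `tupleHom b m`. -/
theorem action_mon {k : Type} [Field k] {A : Type} [AddCommGroup A] {r : ℕ} (b : Fin r → A)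
    (g : A →+ Additive kˣ) (φ : RatFunField k r ≃ₐ[k] RatFunField k r)
    (hφ : ∀ i, φ (coord k i) = algebraMap (MvPolynomial (Fin r) k) _
        (MvPolynomial.C ((Additive.toMul (g (b i)) : kˣ) : k) * MvPolynomial.X i))
    (m : Fin r → ℤ) :
    φ (mon k m) = algebraMap k _ ((Additive.toMul (g (tupleHom b m)) : kˣ) : k) * mon k m := by
  have h : ∀ i, φ (coord k i) =
      algebraMap k _ ((Additive.toMul (g (b i)) : kˣ) : k) * coord k i := fun i => by
    rw [hφ, map_mul]; rfl
  have h2 := map_mon (φ : RatFunField k r →ₐ[k] RatFunField k r) m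
  simp only [AlgEquiv.coe_toAlgHom, h, mul_zpow, Finset.prod_mul_distrib] at h2
  rw [h2, tupleHom_apply, map_sum, toMul_sum]
  simp [mon, map_zsmul]

open RatFunField in
/-- A lattice automorphism carrying the weights of `a` to those of `b` induces an equivariant monomial
automorphism. -/
theorem exists_intertwining {k : Type} [Field k] {A : Type} [AddCommGroup A] {r : ℕ}
    (a b : Fin r → A)
    (ρa ρb : (A →+ Additive kˣ) → (RatFunField k r ≃ₐ[k] RatFunField k r))
    (hρa : ∀ g i, ρa g (coord k i) = algebraMap (MvPolynomial (Fin r) k) _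
        (MvPolynomial.C ((Additive.toMul (g (a i)) : kˣ) : k) * MvPolynomial.X i))
    (hρb : ∀ g i, ρb g (coord k i) = algebraMap (MvPolynomial (Fin r) k) _
        (MvPolynomial.C ((Additive.toMul (g (b i)) : kˣ) : k) * MvPolynomial.X i))
    (e : (Fin r → ℤ) ≃+ (Fin r → ℤ)) (he : ∀ m, tupleHom b (e m) = tupleHom a m) :
    ∃ Φ : RatFunField k r ≃ₐ[k] RatFunField k r, ∀ g x, Φ (ρa g x) = ρb g (Φ x) := by
  refine ⟨monomialEquiv e, fun g x => ?_⟩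
  have h : ((monomialEquiv e).toAlgHom.comp (ρa g).toAlgHom : RatFunField k r →ₐ[k] _) =
      (ρb g).toAlgHom.comp (monomialEquiv e).toAlgHom := hom_ext fun i => by
    change monomialEquiv e (ρa g (coord k i)) = ρb g (monomialEquiv e (coord k i))
    rw [← mon_single, action_mon a g _ (hρa g), map_mul, AlgEquiv.commutes, monomialEquiv_mon,
      action_mon b g _ (hρb g), he]
  exact DFunLike.congr_fun h x

/-- Let `A = ℤ/n₁ℤ × ⋯ × ℤ/n_rℤ` (0-indexed as `n 0, …, n (r-1)`; `ℤ/0ℤ = ℤ`)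
with each `nᵢ ≠ 1`, `nᵢ ∣ nᵢ₊₁`, and `n₁ = 0` or `n₁ = 2`.  Then for any two generating
`r`-tuples `a`, `b` of `A` and the corresponding actions of `G = Hom(A, kˣ)` on
`K_r = Frac(k[X₁, …, X_r])`, some `k`-algebra automorphism `Φ` of `K_r` intertwines the two
actions: any two faithful `r`-dimensional representations of the rank-`r` diagonalizable group
with character lattice `A` are birationally equivalent. -/
theorem birational_of_n1_eq_zero_or_two {k : Type} [Field k] [IsAlgClosed k] [CharZero k]
    {r : ℕ} (hr : 0 < r) (n : ℕ → ℕ)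
    (hn1 : ∀ i < r, n i ≠ 1) (hdvd : ∀ i, i + 1 < r → n i ∣ n (i + 1))
    (h0 : n 0 = 0 ∨ n 0 = 2)
    (a b : Fin r → (∀ i : Fin r, ZMod (n i.val)))
    (ha : AddSubgroup.closure (Set.range a) = ⊤)
    (hb : AddSubgroup.closure (Set.range b) = ⊤)
    (ρa ρb : ((∀ i : Fin r, ZMod (n i.val)) →+ Additive kˣ) →
      (FractionRing (MvPolynomial (Fin r) k) ≃ₐ[k] FractionRing (MvPolynomial (Fin r) k)))
    (hρa_act : ∀ g g' x, ρa (g + g') x = ρa g (ρa g' x))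
    (hρb_act : ∀ g g' x, ρb (g + g') x = ρb g (ρb g' x))
    (hρa : ∀ g i, ρa g (algebraMap (MvPolynomial (Fin r) k) _ (MvPolynomial.X i)) =
      algebraMap (MvPolynomial (Fin r) k) _
        (MvPolynomial.C ((Additive.toMul (g (a i)) : kˣ) : k) * MvPolynomial.X i))
    (hρb : ∀ g i, ρb g (algebraMap (MvPolynomial (Fin r) k) _ (MvPolynomial.X i)) =
      algebraMap (MvPolynomial (Fin r) k) _
        (MvPolynomial.C ((Additive.toMul (g (b i)) : kˣ) : k) * MvPolynomial.X i)) :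
    ∃ Φ : FractionRing (MvPolynomial (Fin r) k) ≃ₐ[k] FractionRing (MvPolynomial (Fin r) k),
      ∀ g x, Φ (ρa g x) = ρb g (Φ x) := by
  have e_std : ∀ c : Fin r → (∀ i : Fin r, ZMod (n i.val)),
      AddSubgroup.closure (Set.range c) = ⊤ → ∃ e : (Fin r → ℤ) ≃+ (Fin r → ℤ),
        ∀ m i, tupleHom c (e m) i = (m i : ZMod (n i.val)) := by
    intro c hc
    obtain ⟨r, rfl⟩ := Nat.exists_eq_succ_of_ne_zero hr.ne'
    exact exists_equiv_standard h0 r hdvd (tupleHom c) (tupleHom_surjective hc)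
  obtain ⟨ea, hea⟩ := e_std a ha
  obtain ⟨eb, heb⟩ := e_std b hb
  refine exists_intertwining a b ρa ρb hρa hρb (ea.symm.trans eb) fun m => ?_
  ext i
  rw [AddEquiv.trans_apply, heb, ← hea, ea.apply_symm_apply]
end

section
/- Let k be an algebraically closed field of characteristic zero, let n and r be positive integers, let ω ∈ kˣ be a primitive n-th root of unity, let P be a subgroup of the symmetric group S_r, and let G = (ℤ/nℤ)^r ⋊ P, where P acts on (ℤ/nℤ)^r by permuting the coordinates ((σ·a)ᵢ = a_{σ⁻¹(i)}). Let K = Frac(k[X₁, …, X_r]). Define two actions of G on K by k-algebra automorphisms, induced on functions by the linear actions ((a₁, …, a_r), σ)·(v₁, …, v_r) = (ω^{a₁} v_{σ⁻¹(1)}, …, ω^{a_r} v_{σ⁻¹(r)}) and ((a₁, …, a_r), σ)·(v₁, …, v_r) = (ω^{m a₁} v_{σ⁻¹(1)}, …, ω^{m a_r} v_{σ⁻¹(r)}) on affine r-space; explicitly, ρ_V(a, σ) sends Xᵢ to ω^{−a_{σ(i)}}·X_{σ(i)} and ρ_W(a, σ) sends Xᵢ to ω^{−m·a_{σ(i)}}·X_{σ(i)}.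 Suppose m is an integer with gcd(m, n) = 1 and m^r ≢ 1 (mod n) and m^r ≢ −1 (mod n). Then there is no k-algebra isomorphism Φ : K → K with Φ ∘ ρ_V(g) = ρ_W(g) ∘ Φ for all g ∈ G. (Hence these two faithful r-dimensional representations of G are not birationally isomorphic as G-varieties, and Katsylo's conjecture fails for G.) -/
/-! The proof attaches to each birational automorphism an integer matrix whose determinant is
`0` or `±1`.

Let `ν` be the lexicographic leading-exponent valuation on `K = k(X₁, …, X_r)`, with value group
`ℤ^r` ordered lexicographically and `ν(Xⱼ) = eⱼ`. Let `Φ` intertwine the two actions, put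
`fᵢ = Φ(Xᵢ)`, and let `M` be the matrix whose `i`-th row is `ν(fᵢ)`.

* `det M ∈ {0, 1, -1}`. If `det M ≠ 0`, the vectors `ν(fᵢ)` are `ℤ`-independent, so distinct
  monomials in the `fᵢ` have distinct values and the value of a polynomial in the `fᵢ` is the value
  of one of its monomials (`exists_lexExp_aeval`). As the `fᵢ` generate `K`, every `eⱼ` is an
  integer combination of the rows of `M`, hence `M` is invertible over `ℤ`
  (`det_lexExp_eq`).
* `m • M ≡ 1 (mod n)`. The element `fᵢ` is an eigenvector of the diagonal group `(ℤ/nℤ)^r` acting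
  through `ρ_W`, with the character by which `ρ_V` acts on `Xᵢ`; that character can be read off the
  leading monomial (`eigenvalue_eq_prod_zpow`).

Taking determinants gives `m^r · det M ≡ 1 (mod n)`, so `m^r ≡ ±1`, or else `det M = 0`, `n = 1`
and the congruence holds trivially. Only the diagonal subgroup `(ℤ/nℤ)^r` of `G` is used. -/

namespace KatsyloAux

open MvPolynomial MonomialOrder

/-! ### The lexicographic leading-exponent valuation -/

/-- The lexicographically ordered group `ℤ^r`, written multiplicatively and with a zero adjoined. -/
abbrev LexVG (r : ℕ) : Type := WithZero (Multiplicative (Lex (Fin r → ℤ)))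

/-- An exponent vector, viewed in the lexicographically ordered group `ℤ^r`. -/
def expVec {r : ℕ} (d : Fin r →₀ ℕ) : Lex (Fin r → ℤ) := toLex fun i => (d i : ℤ)

lemma expVec_add {r : ℕ} (d e : Fin r →₀ ℕ) : expVec (d + e) = expVec d + expVec e := by
  apply ofLex.injective
  funext i
  exact Nat.cast_add (d i) (e i)

lemma expVec_lt {r : ℕ} {d e : Fin r →₀ ℕ} (h : lex.toSyn d < lex.toSyn e) :
    expVec d < expVec e := by
  rw [lex_lt_iff, Finsupp.Lex.lt_iff] at h
  obtain ⟨i, hi, hlt⟩ := h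
  refine ⟨i, fun j hj => ?_, ?_⟩
  · simpa [expVec] using hi j hj
  · simpa [expVec] using hlt

lemma expVec_le {r : ℕ} {d e : Fin r →₀ ℕ} (h : lex.toSyn d ≤ lex.toSyn e) :
    expVec d ≤ expVec e := by
  rcases h.lt_or_eq with h | h
  · exact (expVec_lt h).le
  · rw [lex.toSyn.injective h]

variable {k : Type} [Field k] {r : ℕ}

open Classical in
/-- The valuation of a polynomial given by its lexicographic leading exponent (so larger monomials
have larger value, in the multiplicative convention). -/
noncomputable def polyVal (k : Type) [Field k] (r : ℕ) :
    Valuation (MvPolynomial (Fin r) k) (LexVG r) where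
  toFun p := if p = 0 then 0 else WithZero.exp (expVec (lex.degree p))
  map_zero' := by simp
  map_one' := by
    rw [if_neg one_ne_zero, degree_one]
    rfl
  map_mul' p q := by
    by_cases hp : p = 0
    · simp [hp]
    by_cases hq : q = 0
    · simp [hq]
    rw [if_neg hp, if_neg hq, if_neg (mul_ne_zero hp hq), degree_mul hp hq, expVec_add,
      WithZero.exp_add]
  map_add_le_max' p q := by
    by_cases hp : p = 0
    · simp [hp]
    by_cases hq : q = 0
    · simp [hq]
    by_cases hpq : p + q = 0
    · simp [hpq]
    rw [if_neg hp, if_neg hq, if_neg hpq, le_max_iff, WithZero.exp_le_exp, WithZero.exp_le_exp]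
    exact (le_max_iff.1 (degree_add_le (m := lex) (f := p) (g := q))).imp expVec_le expVec_le

lemma polyVal_apply {p : MvPolynomial (Fin r) k} (hp : p ≠ 0) :
    polyVal k r p = WithZero.exp (expVec (lex.degree p)) := if_neg hp

lemma nonZeroDivisors_le_primeCompl :
    nonZeroDivisors (MvPolynomial (Fin r) k) ≤ (polyVal k r).supp.primeCompl := by
  intro p hp hmem
  have hp0 : p ≠ 0 := nonZeroDivisors.ne_zero hp
  have h0 : polyVal k r p = 0 := hmem
  rw [polyVal_apply hp0] at h0
  exact WithZero.exp_ne_zero h0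

/-- The extension of `polyVal` to the field of rational functions. -/
noncomputable def ratVal (k : Type) [Field k] (r : ℕ) :
    Valuation (FractionRing (MvPolynomial (Fin r) k)) (LexVG r) :=
  (polyVal k r).extendToLocalization nonZeroDivisors_le_primeCompl _

lemma ratVal_algebraMap {p : MvPolynomial (Fin r) k} (hp : p ≠ 0) :
    ratVal k r (algebraMap _ _ p) = WithZero.exp (expVec (lex.degree p)) := by
  rw [ratVal, Valuation.extendToLocalization_apply_map_apply, polyVal_apply hp]

/-- The additive form of `ratVal`: the lexicographic leading exponent of a rational function, as a
vector in `ℤ^r` (with junk value `0` at `0`). -/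
noncomputable def lexExp (x : FractionRing (MvPolynomial (Fin r) k)) : Fin r → ℤ :=
  ofLex (ratVal k r x).log

lemma ratVal_eq_exp {x : FractionRing (MvPolynomial (Fin r) k)} (hx : x ≠ 0) :
    ratVal k r x = WithZero.exp (toLex (lexExp x)) := by
  rw [lexExp, toLex_ofLex, WithZero.exp_log ((ratVal k r).ne_zero_iff.2 hx)]

lemma lexExp_mul {x y : FractionRing (MvPolynomial (Fin r) k)} (hx : x ≠ 0) (hy : y ≠ 0) :
    lexExp (x * y) = lexExp x + lexExp y := by
  rw [lexExp, map_mul, WithZero.log_mul ((ratVal k r).ne_zero_iff.2 hx)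
    ((ratVal k r).ne_zero_iff.2 hy)]
  rfl

lemma lexExp_algebraMap {p : MvPolynomial (Fin r) k} (hp : p ≠ 0) :
    lexExp (algebraMap _ (FractionRing (MvPolynomial (Fin r) k)) p) =
      fun i => (lex.degree p i : ℤ) := by
  rw [lexExp, ratVal_algebraMap hp, WithZero.log_exp]
  rfl

lemma lexExp_X (j : Fin r) :
    lexExp (algebraMap (MvPolynomial (Fin r) k) (FractionRing (MvPolynomial (Fin r) k)) (X j)) =
      Pi.single j 1 := by
  classical
  rw [lexExp_algebraMap (X_ne_zero j), degree_X]
  funext i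
  by_cases h : i = j
  · subst h; simp
  · simp [h]

lemma algebraMap_ne_zero {p : MvPolynomial (Fin r) k} (hp : p ≠ 0) :
    algebraMap _ (FractionRing (MvPolynomial (Fin r) k)) p ≠ 0 :=
  (map_ne_zero_iff _ (IsFractionRing.injective _ _)).2 hp

lemma lexExp_div {p q : MvPolynomial (Fin r) k} (hp : p ≠ 0) (hq : q ≠ 0) (i : Fin r) :
    lexExp (algebraMap _ (FractionRing (MvPolynomial (Fin r) k)) p / algebraMap _ _ q) i =
      (lex.degree p i : ℤ) - lex.degree q i := by
  have h := lexExp_mul (div_ne_zero (algebraMap_ne_zero hp) (algebraMap_ne_zero hq))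
    (algebraMap_ne_zero hq)
  rw [div_mul_cancel₀ _ (algebraMap_ne_zero hq), lexExp_algebraMap hp,
    lexExp_algebraMap hq] at h
  have := congrFun h i
  simp only [Pi.add_apply] at this
  omega

/-! ### The determinant of the exponent matrix of a generating family -/

lemma ratVal_monomial {f : Fin r → FractionRing (MvPolynomial (Fin r) k)} (hf : ∀ i, f i ≠ 0)
    {c : k} (hc : c ≠ 0) (d : Fin r →₀ ℕ) :
    ratVal k r (algebraMap k _ c * ∏ i ∈ d.support, f i ^ d i) =
      WithZero.exp (toLex (Matrix.vecMul (fun i => (d i : ℤ))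
        (Matrix.of fun i => lexExp (f i)))) := by
  have hC : ratVal k r (algebraMap k _ c) = 1 := by
    rw [IsScalarTower.algebraMap_apply k (MvPolynomial (Fin r) k), algebraMap_eq,
      ratVal_algebraMap (p := C c) (C_ne_zero.2 hc), degree_C]
    rfl
  have hpow : ∀ (s : Finset (Fin r)), ratVal k r (∏ i ∈ s, f i ^ d i) =
      WithZero.exp (toLex (∑ i ∈ s, (d i : ℤ) • lexExp (f i))) := by
    classical
    intro s
    induction s using Finset.induction_on with
    | empty => simp
    | insert a s ha ih =>
      rw [Finset.prod_insert ha, Finset.sum_insert ha, map_mul, ih, toLex_add, WithZero.exp_add,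
        map_pow, ratVal_eq_exp (hf a), ← WithZero.exp_nsmul, natCast_zsmul]
      rfl
  rw [map_mul, hC, one_mul, hpow, Matrix.vecMul_eq_sum]
  congr 2
  refine Finset.sum_subset (Finset.subset_univ _) fun i _ hi => ?_
  simp [Finsupp.notMem_support_iff.1 hi]

/-- If the values of the `fᵢ` are linearly independent, the monomials in the `fᵢ` have distinct
values, so the value of a polynomial in the `fᵢ` is attained by one of its monomials. -/
lemma exists_lexExp_aeval {f : Fin r → FractionRing (MvPolynomial (Fin r) k)}
    (hf : ∀ i, f i ≠ 0) (hdet : (Matrix.of fun i => lexExp (f i)).det ≠ 0)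
    {p : MvPolynomial (Fin r) k} (hp : p ≠ 0) :
    ∃ d : Fin r → ℤ, lexExp (aeval f p) = Matrix.vecMul d (Matrix.of fun i => lexExp (f i)) := by
  classical
  set M := Matrix.of fun i => lexExp (f i) with hM
  set t : (Fin r →₀ ℕ) → FractionRing (MvPolynomial (Fin r) k) := fun d =>
    algebraMap k _ (coeff d p) * ∏ i ∈ d.support, f i ^ d i with ht
  have hval : ∀ d ∈ p.support, ratVal k r (t d) =
      WithZero.exp (toLex (Matrix.vecMul (fun i => (d i : ℤ)) M)) := fun d hd =>
    ratVal_monomial hf (mem_support_iff.1 hd) d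
  obtain ⟨d, hd, hmax⟩ := p.support.exists_max_image (fun d => ratVal k r (t d))
    (support_nonempty.2 hp)
  have hsum : ratVal k r (aeval f p) = ratVal k r (t d) := by
    rw [aeval_def, eval₂_eq]
    refine Valuation.map_sum_eq_of_lt _ hd fun e he => ?_
    obtain ⟨he, hne⟩ := Finset.mem_sdiff.1 he
    refine lt_of_le_of_ne (hmax e he) fun heq => hne ?_
    change ratVal k r (t e) = ratVal k r (t d) at heq
    rw [hval e he, hval d hd, WithZero.exp_inj, toLex_inj] at heq
    have := Matrix.vecMul_injective_iff.2
      (Matrix.linearIndependent_rows_of_det_ne_zero hdet) heq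
    rw [Finset.mem_singleton]
    ext i
    exact_mod_cast congrFun this i
  refine ⟨fun i => d i, ?_⟩
  rw [lexExp, hsum, hval d hd, WithZero.log_exp, ofLex_toLex]

/-- The exponent vectors of the images of the coordinates under a `k`-automorphism are either
linearly dependent or a basis of `ℤ^r`, since the images generate the field and the valuation is
onto `ℤ^r`. -/
lemma det_lexExp_eq (Φ : FractionRing (MvPolynomial (Fin r) k) ≃ₐ[k]
      FractionRing (MvPolynomial (Fin r) k)) :
    let D := (Matrix.of fun i => lexExp (Φ (algebraMap (MvPolynomial (Fin r) k) _ (X i)))).det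
    D = 0 ∨ D = 1 ∨ D = -1 := by
  intro D
  by_cases hD : D = 0
  · exact Or.inl hD
  refine Or.inr (Int.isUnit_iff.1 ?_)
  set f := fun i => Φ (algebraMap (MvPolynomial (Fin r) k) _ (X i)) with hfdef
  have hf : ∀ i, f i ≠ 0 := fun i =>
    (map_ne_zero_iff Φ Φ.injective).2 (algebraMap_ne_zero (X_ne_zero i))
  have hΦ : ∀ p : MvPolynomial (Fin r) k, Φ (algebraMap _ _ p) = aeval f p := by
    intro p
    have : (Φ.toAlgHom.comp (Algebra.algHom k (MvPolynomial (Fin r) k)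
        (FractionRing (MvPolynomial (Fin r) k)))) = aeval f := by
      ext i
      simp only [hfdef, AlgHom.comp_apply, aeval_X]
      rfl
    exact DFunLike.congr_fun this p
  have key : ∀ j : Fin r, ∃ d : Fin r → ℤ,
      Matrix.vecMul d (Matrix.of fun i => lexExp (f i)) = Pi.single j 1 := by
    intro j
    obtain ⟨p, q, hq, hpq⟩ := IsFractionRing.div_surjective (MvPolynomial (Fin r) k)
      (Φ.symm (algebraMap (MvPolynomial (Fin r) k) _ (X j)))
    have hq0 : q ≠ 0 := nonZeroDivisors.ne_zero hq
    have hX0 := algebraMap_ne_zero (p := (X j : MvPolynomial (Fin r) k)) (X_ne_zero j)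
    have hp0 : p ≠ 0 := by
      rintro rfl
      rw [map_zero, zero_div] at hpq
      exact (map_ne_zero_iff Φ.symm Φ.symm.injective).2 hX0 hpq.symm
    have hq' : aeval f q ≠ 0 := by
      rw [← hΦ]
      exact (map_ne_zero_iff Φ Φ.injective).2 (algebraMap_ne_zero hq0)
    have hmul : algebraMap (MvPolynomial (Fin r) k) _ (X j) * aeval f q = aeval f p := by
      rw [← hΦ, ← hΦ, ← Φ.apply_symm_apply (algebraMap (MvPolynomial (Fin r) k) _ (X j)), ← hpq, ← map_mul,
        div_mul_cancel₀ _ (algebraMap_ne_zero hq0)]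
    obtain ⟨d, hd⟩ := exists_lexExp_aeval hf hD hp0
    obtain ⟨e, he⟩ := exists_lexExp_aeval hf hD hq0
    refine ⟨d - e, ?_⟩
    rw [Matrix.sub_vecMul, ← hd, ← he, ← hmul, lexExp_mul hX0 hq', lexExp_X]
    simp
  choose N hN using key
  have hNM : Matrix.of N * (Matrix.of fun i => lexExp (f i)) = 1 := by
    ext i j
    rw [Matrix.mul_apply_eq_vecMul]
    change Matrix.vecMul (N i) _ j = _
    rw [hN, Matrix.one_apply, Pi.single_apply]
    simp [eq_comm]
  exact (Matrix.isUnit_iff_isUnit_det _).1 (IsUnit.of_mul_eq_one_right _ hNM)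

/-! ### Eigenvectors of diagonal automorphisms -/

/-- The substitution `Xᵢ ↦ cᵢ Xᵢ`. -/
noncomputable def scale (c : Fin r → kˣ) :
    MvPolynomial (Fin r) k →ₐ[k] MvPolynomial (Fin r) k :=
  aeval fun i => C (c i : k) * X i

lemma coeff_scale (c : Fin r → kˣ) (p : MvPolynomial (Fin r) k) (d : Fin r →₀ ℕ) :
    coeff d (scale c p) = ((∏ i, c i ^ d i : kˣ) : k) * coeff d p := by
  classical
  induction p using MvPolynomial.induction_on' with
  | monomial e a =>
    have : scale c (monomial e a) = monomial e (((∏ i, c i ^ e i : kˣ) : k) * a) := by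
      rw [scale, aeval_monomial, Finsupp.prod_fintype _ _ (by simp), algebraMap_eq]
      simp only [mul_pow, Finset.prod_mul_distrib, ← C_pow]
      rw [monomial_eq, Finsupp.prod_fintype _ _ (by simp), ← map_prod, C_mul]
      push_cast
      ring
    rw [this, coeff_monomial, coeff_monomial]
    split_ifs with h
    · rw [h]
    · simp
  | add p q hp hq => rw [map_add, coeff_add, coeff_add, hp, hq, mul_add]

lemma degree_scale (c : Fin r → kˣ) (p : MvPolynomial (Fin r) k) :
    lex.degree (scale c p) = lex.degree p := by
  have h : (scale c p).support = p.support := by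
    ext d
    rw [mem_support_iff, mem_support_iff, coeff_scale, ne_eq, Units.mul_right_eq_zero]
  simp only [degree, h]

lemma leadingCoeff_scale (c : Fin r → kˣ) (p : MvPolynomial (Fin r) k) :
    lex.leadingCoeff (scale c p) =
      ((∏ i, c i ^ lex.degree p i : kˣ) : k) * lex.leadingCoeff p := by
  rw [leadingCoeff, degree_scale, coeff_scale, leadingCoeff]

/-- The eigenvalue of a diagonal automorphism on an eigenvector is the one on its leading
monomial. -/
lemma eigenvalue_eq_prod_zpow (c : Fin r → kˣ)
    (θ : FractionRing (MvPolynomial (Fin r) k) ≃ₐ[k] FractionRing (MvPolynomial (Fin r) k))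
    (hθ : ∀ i, θ (algebraMap (MvPolynomial (Fin r) k) _ (X i)) =
      algebraMap (MvPolynomial (Fin r) k) _ (C (c i : k) * X i))
    {x : FractionRing (MvPolynomial (Fin r) k)} (hx : x ≠ 0) (u : kˣ)
    (hu : θ x = algebraMap (MvPolynomial (Fin r) k) _ (C (u : k)) * x) :
    u = ∏ i, c i ^ lexExp x i := by
  have hscale : ∀ p : MvPolynomial (Fin r) k,
      θ (algebraMap _ _ p) = algebraMap _ _ (scale c p) := by
    intro p
    have : θ.toAlgHom.comp (Algebra.algHom k (MvPolynomial (Fin r) k)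
        (FractionRing (MvPolynomial (Fin r) k))) =
        (Algebra.algHom k (MvPolynomial (Fin r) k)
          (FractionRing (MvPolynomial (Fin r) k))).comp (scale c) := by
      ext i
      simp only [AlgHom.comp_apply, scale, aeval_X]
      exact hθ i
    exact DFunLike.congr_fun this p
  obtain ⟨p, q, hq, rfl⟩ := IsFractionRing.div_surjective (MvPolynomial (Fin r) k) x
  have hq0 : q ≠ 0 := nonZeroDivisors.ne_zero hq
  have hp0 : p ≠ 0 := by
    rintro rfl
    simp at hx
  have hqK := algebraMap_ne_zero hq0
  have hsq : algebraMap _ (FractionRing (MvPolynomial (Fin r) k)) (scale c q) ≠ 0 := by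
    rw [← hscale]
    exact (map_ne_zero_iff θ θ.injective).2 hqK
  have hpoly : scale c p * q = C (u : k) * p * scale c q := by
    apply IsFractionRing.injective (MvPolynomial (Fin r) k)
      (FractionRing (MvPolynomial (Fin r) k))
    rw [map_div₀, hscale, hscale] at hu
    rw [← mul_div_assoc, div_eq_div_iff hsq hqK] at hu
    simpa only [map_mul] using hu
  have hlc := congrArg lex.leadingCoeff hpoly
  simp only [leadingCoeff_mul, leadingCoeff_scale, leadingCoeff_C] at hlc
  have hp1 : lex.leadingCoeff p ≠ 0 := leadingCoeff_ne_zero_iff.2 hp0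
  have hq1 : lex.leadingCoeff q ≠ 0 := leadingCoeff_ne_zero_iff.2 hq0
  have hU : (∏ i, c i ^ lex.degree p i : kˣ) = u * ∏ i, c i ^ lex.degree q i := by
    apply Units.ext
    rw [Units.val_mul]
    apply mul_right_cancel₀ (mul_ne_zero hp1 hq1)
    linear_combination hlc
  simp only [lexExp_div hp0 hq0, zpow_sub, zpow_natCast, Finset.prod_mul_distrib,
    Finset.prod_inv_distrib]
  rw [hU, mul_inv_cancel_right]

end KatsyloAux

open MvPolynomial KatsyloAux in

/-- Let `ω ∈ kˣ` be a primitive `n`-th root of unity, `P ≤ S_r`, and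
`G = (ℤ/nℤ)^r ⋊ P` (with `P` permuting coordinates).  Consider the two actions `ρ_V`, `ρ_W` of
`G` on `K = Frac(k[X₁, …, X_r])` by `k`-algebra automorphisms determined by
`ρ_V(a, σ) : Xᵢ ↦ ω^{−a_{σ(i)}}·X_{σ(i)}` and `ρ_W(a, σ) : Xᵢ ↦ ω^{−m·a_{σ(i)}}·X_{σ(i)}`
(the contragredient actions of the linear representations `V` and `W` of the paper).
If `gcd(m, n) = 1` and `m^r ≢ ±1 (mod n)`, then no `k`-algebra automorphism `Φ` of `K`
intertwines `ρ_V` and `ρ_W`: the representations `V` and `W` are not birationally isomorphic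
as `G`-varieties, so Katsylo's conjecture fails for `G`. -/
theorem not_birational_semidirect {k : Type} [Field k] [IsAlgClosed k] [CharZero k]
    {n r : ℕ} (hn : 0 < n) (hr : 0 < r)
    (ω : kˣ) (hω : IsPrimitiveRoot ω n)
    (P : Subgroup (Equiv.Perm (Fin r)))
    (m : ℤ) (hmn : Int.gcd m n = 1)
    (h1 : ¬ (m ^ r ≡ 1 [ZMOD (n : ℤ)])) (h2 : ¬ (m ^ r ≡ -1 [ZMOD (n : ℤ)]))
    (ρV ρW : (Fin r → ZMod n) → Equiv.Perm (Fin r) →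
      (FractionRing (MvPolynomial (Fin r) k) ≃ₐ[k] FractionRing (MvPolynomial (Fin r) k)))
    -- `ρV` and `ρW` are actions of the semidirect product `G = (ℤ/nℤ)^r ⋊ P`:
    -- `(a, σ)·(b, τ) = (a + σ·b, στ)` where `(σ·b)ᵢ = b_{σ⁻¹(i)}`
    (hρV_act : ∀ (a b : Fin r → ZMod n) (σ τ : Equiv.Perm (Fin r)), σ ∈ P → τ ∈ P →
      ∀ x, ρV (fun i => a i + b (σ⁻¹ i)) (σ * τ) x = ρV a σ (ρV b τ x))
    (hρW_act : ∀ (a b : Fin r → ZMod n) (σ τ : Equiv.Perm (Fin r)), σ ∈ P → τ ∈ P →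
      ∀ x, ρW (fun i => a i + b (σ⁻¹ i)) (σ * τ) x = ρW a σ (ρW b τ x))
    -- the values of `ρV` and `ρW` on the coordinate functions `Xᵢ`
    (hρV : ∀ (a : Fin r → ZMod n) (σ : Equiv.Perm (Fin r)), σ ∈ P → ∀ i,
      ρV a σ (algebraMap (MvPolynomial (Fin r) k) _ (MvPolynomial.X i)) =
        algebraMap (MvPolynomial (Fin r) k) _
          (MvPolynomial.C ((((ω ^ (a (σ i)).val)⁻¹ : kˣ) : k)) * MvPolynomial.X (σ i)))
    (hρW : ∀ (a : Fin r → ZMod n) (σ : Equiv.Perm (Fin r)), σ ∈ P → ∀ i,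
      ρW a σ (algebraMap (MvPolynomial (Fin r) k) _ (MvPolynomial.X i)) =
        algebraMap (MvPolynomial (Fin r) k) _
          (MvPolynomial.C ((((ω ^ ((m • a (σ i)).val))⁻¹ : kˣ) : k)) * MvPolynomial.X (σ i))) :
    ¬ ∃ Φ : FractionRing (MvPolynomial (Fin r) k) ≃ₐ[k] FractionRing (MvPolynomial (Fin r) k),
      ∀ (a : Fin r → ZMod n) (σ : Equiv.Perm (Fin r)), σ ∈ P →
        ∀ x, Φ (ρV a σ x) = ρW a σ (Φ x) := by
  rintro ⟨Φ, hΦ⟩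
  classical
  have : NeZero n := ⟨hn.ne'⟩
  set M : Matrix (Fin r) (Fin r) ℤ :=
    Matrix.of fun i => lexExp (Φ (algebraMap (MvPolynomial (Fin r) k) _ (X i))) with hM
  have hentry : ∀ i j, (m : ZMod n) * (M i j : ZMod n) = (1 : Matrix _ _ (ZMod n)) i j := by
    intro i j
    -- The `j`-th coordinate generator of `(ℤ/nℤ)^r`.
    set a : Fin r → ZMod n := Pi.single j 1 with ha
    have hx : Φ (algebraMap (MvPolynomial (Fin r) k) _ (X i)) ≠ 0 :=
      (map_ne_zero_iff Φ Φ.injective).2 (algebraMap_ne_zero (X_ne_zero i))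
    have hu : ρW a 1 (Φ (algebraMap (MvPolynomial (Fin r) k) _ (X i))) =
        algebraMap (MvPolynomial (Fin r) k) _ (C (((ω ^ (a i).val)⁻¹ : kˣ) : k)) *
          Φ (algebraMap (MvPolynomial (Fin r) k) _ (X i)) := by
      rw [← hΦ a 1 P.one_mem, hρV a 1 P.one_mem, map_mul, map_mul, Equiv.Perm.one_apply,
        ← algebraMap_eq, ← IsScalarTower.algebraMap_apply, AlgEquiv.commutes]
    have h := eigenvalue_eq_prod_zpow (fun l => (ω ^ (m • a l).val)⁻¹) (ρW a 1)
      (fun l => hρW a 1 P.one_mem l) hx _ hu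
    rw [Finset.prod_eq_single j (fun l _ hl => by simp [ha, hl]) (by simp)] at h
    change _ = _ ^ M i j at h
    have h' : ω ^ (((m • a j).val : ℤ) * M i j - ((a i).val : ℤ)) = 1 := by
      rw [zpow_sub, zpow_mul, zpow_natCast, zpow_natCast, h, inv_zpow, mul_inv_cancel]
    rw [hω.zpow_eq_one_iff_dvd, ← ZMod.intCast_zmod_eq_zero_iff_dvd] at h'
    push_cast at h'
    rw [ZMod.natCast_zmod_val, ZMod.natCast_zmod_val, sub_eq_zero] at h'
    simp only [ha, Pi.single_eq_same, zsmul_one] at h'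
    rw [h', Pi.single_apply, Matrix.one_apply]
  have hmat : (m : ZMod n) • (Int.castRingHom (ZMod n)).mapMatrix M = 1 := by
    ext i j
    simpa using hentry i j
  have hdet : (m : ZMod n) ^ r * (M.det : ZMod n) = 1 := by
    have := congrArg Matrix.det hmat
    rwa [Matrix.det_smul, Fintype.card_fin, ← RingHom.map_det, Matrix.det_one] at this
  rcases det_lexExp_eq Φ with h0 | h0 | h0
  -- A zero determinant forces `0 = 1` in `ZMod n`, that is `n = 1`.
  · have h0' : M.det = 0 := h0
    rw [h0', Int.cast_zero, mul_zero] at hdet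
    refine h1 ((ZMod.intCast_eq_intCast_iff _ _ n).1 ?_)
    exact eq_of_zero_eq_one hdet _ _
  · have h0' : M.det = 1 := h0
    rw [h0'] at hdet
    refine h1 ((ZMod.intCast_eq_intCast_iff _ _ n).1 ?_)
    simpa using hdet
  · have h0' : M.det = -1 := h0
    rw [h0'] at hdet
    refine h2 ((ZMod.intCast_eq_intCast_iff _ _ n).1 ?_)
    push_cast at hdet ⊢
    linear_combination -hdet
end
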